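/- Let X, Y ⊆ ℝ be a pair of admissible sets and let F : (0,∞) → (0,∞). Then F∘K is a totally positive Toeplitz kernel on X × Y for every totally positive Toeplitz kernel K on X × Y if and only if F(x) = c·x for some c > 0. -/

import Mathlib

/-- A kernel on linearly ordered sets is totally positive if all matrices
obtained by evaluating it on increasing tuples have positive determinant. -/
def IsTPKernel {X Y : Type*} [LinearOrder X] [LinearOrder Y] (K : X → Y → ℝ) : Prop :=
  ∀ (n : ℕ) (x : Fin n → X) (y : Fin n → Y), StrictMono x → StrictMono y →
    0 < (Matrix.of fun i j : Fin n => K (x i) (y j)).det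

/-- A pair of subsets of `ℝ` is admissible if, for each `n ≥ 2`, both contain
`n`-term arithmetic progressions with the same (positive) common difference. -/
def AdmissiblePair (X Y : Set ℝ) : Prop :=
  ∀ n : ℕ, 2 ≤ n → ∃ x y h : ℝ, 0 < h ∧
    (∀ i : ℕ, i < n → x + i * h ∈ X) ∧ (∀ i : ℕ, i < n → y + i * h ∈ Y)

def TPm (φ : ℝ → ℝ) : Prop :=
  ∀ (n : ℕ) (u v : Fin n → ℝ), (∀ i, 0 < u i) → (∀ j, 0 < v j) → StrictMono u → StrictMono v →
    0 < (Matrix.of fun i j : Fin n => φ (u i / v j)).det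

theorem cauchy_pos : ∀ (n : ℕ) (a b : Fin n → ℝ), (∀ i, 0 < a i) → (∀ j, 0 < b j) →
    StrictMono a → StrictMono b → 0 < (Matrix.of fun i j : Fin n => (a i + b j)⁻¹).det := by
  intro n
  induction n with
  | zero => intro a b _ _ _ _; simp
  | succ n ih =>
    intro a b ha hb hma hmb
    have hne : ∀ i j, a i + b j ≠ 0 := fun i j => (add_pos (ha i) (hb j)).ne'
    let B : Matrix (Fin (n+1)) (Fin (n+1)) ℝ := Matrix.of fun i j =>
      if i = 0 then (a 0 + b j)⁻¹ else
        (a i + b j)⁻¹ - (a 0 + b 0) / (a i + b 0) * (a 0 + b j)⁻¹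
    have h1 : (Matrix.of fun i j : Fin (n+1) => (a i + b j)⁻¹).det = B.det := by
      refine Matrix.det_eq_of_forall_row_eq_smul_add_const
        (fun i => if i = 0 then 0 else (a 0 + b 0) / (a i + b 0)) 0 (by simp) ?_
      intro i j
      by_cases hi : i = 0
      · subst hi; simp [B]
      · simp [B, hi]
    rw [h1, Matrix.det_succ_column_zero, Fin.sum_univ_succ]
    have h2 : ∀ i : Fin n, B i.succ 0 = 0 := by
      intro i
      have := hne i.succ 0
      have := hne 0 0
      simp only [B, Matrix.of_apply, Fin.succ_ne_zero, if_false]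
      field_simp
      ring
    have h3 : B.submatrix (Fin.succAbove 0) Fin.succ = Matrix.of fun i j : Fin n =>
        ((a i.succ - a 0) / (a i.succ + b 0)) * ((Matrix.of fun i j : Fin n =>
        ((b j.succ - b 0) / (a 0 + b j.succ)) * (Matrix.of fun i j : Fin n =>
          (a i.succ + b j.succ)⁻¹) i j) i j) := by
      ext i j
      have := hne i.succ 0
      have := hne 0 j.succ
      have := hne i.succ j.succ
      simp only [B, Matrix.of_apply, Fin.succ_ne_zero, if_false, Matrix.submatrix_apply,
        Fin.zero_succAbove]
      field_simp
      ring
    rw [h3, Matrix.det_mul_column, Matrix.det_mul_row]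
    simp only [h2, mul_zero, zero_mul, Finset.sum_const_zero, add_zero]
    have := ih (fun i => a i.succ) (fun i => b i.succ) (fun i => ha _) (fun i => hb _)
      (fun i j h => hma (by simpa using h)) (fun i j h => hmb (by simpa using h))
    have h4 : 0 < B 0 0 := by simp [B]; exact add_pos (ha _) (hb _)
    have h5 : 0 < ∏ i : Fin n, ((a i.succ - a 0) / (a i.succ + b 0)) :=
      Finset.prod_pos fun i _ => div_pos (sub_pos.2 (hma (Fin.succ_pos i))) (add_pos (ha _) (hb _))
    have h6 : 0 < ∏ i : Fin n, ((b i.succ - b 0) / (a 0 + b i.succ)) :=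
      Finset.prod_pos fun i _ => div_pos (sub_pos.2 (hmb (Fin.succ_pos i))) (add_pos (ha _) (hb _))
    simp only [Fin.val_zero, pow_zero, one_mul]
    positivity

/-- Row and column scaling. -/
theorem TPm.scale {φ ψ : ℝ → ℝ} (h : TPm φ) (p q : ℝ → ℝ) (hp : ∀ u, 0 < u → 0 < p u)
    (hq : ∀ u, 0 < u → 0 < q u)
    (hψ : ∀ u v, 0 < u → 0 < v → ψ (u / v) = p u * (q v * φ (u / v))) : TPm ψ := by
  intro n u v hu hv hmu hmv
  have : (Matrix.of fun i j : Fin n => ψ (u i / v j)) = Matrix.of fun i j : Fin n =>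
      p (u i) * ((Matrix.of fun i j : Fin n => q (v j) *
        (Matrix.of fun i j : Fin n => φ (u i / v j)) i j) i j) := by
    ext i j
    simp [hψ _ _ (hu i) (hv j)]
  rw [this, Matrix.det_mul_column, Matrix.det_mul_row]
  exact mul_pos (Finset.prod_pos fun i _ => hp _ (hu i))
    (mul_pos (Finset.prod_pos fun i _ => hq _ (hv i)) (h n u v hu hv hmu hmv))

theorem TPm.cauchy (N : ℕ) (hN : N ≠ 0) : TPm (fun r => r ^ N / (1 + r ^ N)) := by
  intro n u v hu hv hmu hmv
  have : (Matrix.of fun i j : Fin n => (u i / v j) ^ N / (1 + (u i / v j) ^ N)) =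
      Matrix.of fun i j : Fin n =>
      (u i) ^ N * (Matrix.of fun i j : Fin n => ((u i) ^ N + (v j) ^ N)⁻¹) i j := by
    ext i j
    have := hu i
    have := hv j
    simp only [Matrix.of_apply]
    rw [div_pow]
    field_simp
    ring
  rw [this, Matrix.det_mul_column]
  exact mul_pos (Finset.prod_pos fun i _ => pow_pos (hu i) _)
    (cauchy_pos n _ _ (fun i => pow_pos (hu i) _) (fun i => pow_pos (hv i) _)
      (fun i j h => pow_lt_pow_left₀ (hmu h) (hu i).le hN)
      (fun i j h => pow_lt_pow_left₀ (hmv h) (hv i).le hN))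

theorem TPm.rpow {φ : ℝ → ℝ} (h : TPm φ) (β : ℝ) : TPm (fun r => r ^ β * φ r) := by
  refine h.scale (fun u => u ^ β) (fun v => (v ^ β)⁻¹) (fun u hu => by positivity)
    (fun u hu => by positivity) ?_
  intro u v hu hv
  rw [Real.div_rpow hu.le hv.le]
  ring

theorem TPm.const_mul {φ : ℝ → ℝ} (h : TPm φ) {c : ℝ} (hc : 0 < c) : TPm (fun r => c * φ r) := by
  refine h.scale (fun u => c) (fun v => 1) (fun u hu => hc)
    (fun u hu => one_pos) ?_
  intro u v hu hv
  ring

theorem TPm.pos {φ : ℝ → ℝ} (h : TPm φ) {r : ℝ} (hr : 0 < r) : 0 < φ r := by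
  have := h 1 (fun _ => r) (fun _ => 1) (fun _ => hr) (fun _ => one_pos)
    (Subsingleton.strictMono _) (Subsingleton.strictMono _)
  simpa using this

/-- Integration preserves strict total positivity. -/
theorem TPm.integral {φ : ℝ → ℝ} (h : TPm φ) (hc : Continuous φ) :
    TPm (fun r => ∫ s in (0:ℝ)..r, φ s) := by
  intro n u v hu hv hmu hmv
  obtain _ | n := n
  · simp
  let P : ℝ → Fin (n+1) → ℝ := fun s j => ∫ s in (0:ℝ)..(s / v j), φ s
  let g : ℝ → Fin (n+1) → ℝ := fun s j => (v j)⁻¹ * φ (s / v j)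
  have hP : ∀ s j, HasDerivAt (fun s => P s j) (g s j) s := by
    intro s j
    have h1 : HasDerivAt (fun r => ∫ s in (0:ℝ)..r, φ s) (φ (s / v j)) (s / v j) :=
      hc.integral_hasStrictDerivAt 0 _ |>.hasDerivAt
    have h2 : HasDerivAt (fun s : ℝ => s / v j) (v j)⁻¹ s := by
      simpa using (hasDerivAt_id s).div_const (v j)
    have := h1.comp s h2
    simpa [P, g, Function.comp_def, mul_comm] using this
  let w : Fin (n+1) → ℝ := Fin.cases 0 (fun i => u i.castSucc)
  have hw0 : w 0 = 0 := rfl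
  have hws : ∀ i : Fin n, w i.succ = u i.castSucc := fun i => rfl
  have hwu : ∀ i, w i < u i := by
    intro i
    refine Fin.cases ?_ (fun i => ?_) i
    · exact hu 0
    · rw [hws]; exact hmu (Fin.castSucc_lt_succ)
  have hw : ∀ i, 0 ≤ w i := by
    intro i
    refine Fin.cases le_rfl (fun i => ?_) i
    rw [hws]; exact (hu _).le
  have hsep : ∀ i j, i < j → u i ≤ w j := by
    intro i j
    refine Fin.cases (by simp) (fun j => ?_) j
    intro hij
    rw [hws]
    exact hmu.monotone (by rw [Fin.le_castSucc_iff]; exact hij)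
  have key : ∀ (S : Finset (Fin (n+1))) (ξ : Fin (n+1) → ℝ), (∀ i, w i < ξ i ∧ ξ i < u i) →
      0 < (Matrix.of fun i j => if i ∈ S then P (u i) j - P (w i) j else g (ξ i) j).det := by
    intro S
    induction S using Finset.induction_on with
    | empty =>
      intro ξ hξ
      simp only [Finset.notMem_empty, if_false, g]
      have := h (n+1) ξ v (fun i => (hw i).trans_lt (hξ i).1) hv
        (fun i j hij => (hξ i).2.trans_le ((hsep i j hij).trans (hξ j).1.le)) hmv
      have h2 := Matrix.det_mul_row (fun j => (v j)⁻¹)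
        (Matrix.of fun i j : Fin (n+1) => φ (ξ i / v j))
      simp only [Matrix.of_apply] at h2
      rw [h2]
      exact mul_pos (Finset.prod_pos fun i _ => inv_pos.2 (hv i)) this
    | insert k S hk ih =>
      intro ξ hξ
      let M : Matrix (Fin (n+1)) (Fin (n+1)) ℝ :=
        Matrix.of fun i j => if i ∈ S then P (u i) j - P (w i) j else g (ξ i) j
      have e1 : (Matrix.of fun i j => if i ∈ insert k S then P (u i) j - P (w i) j else g (ξ i) j)
          = M.updateRow k (P (u k) - P (w k)) := by
        ext i j
        by_cases hik : i = k
        · subst hik; simp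
        · simp [M, hik]
      rw [e1]
      let H : ℝ → ℝ := fun s => (M.updateRow k (P s)).det
      have e2 : (M.updateRow k (P (u k) - P (w k))).det = H (u k) - H (w k) := by
        have := Matrix.det_updateRow_add M k (P (u k) - P (w k)) (P (w k))
        rw [sub_add_cancel] at this
        simp only [H]; linarith
      have hH : ∀ s, HasDerivAt H ((M.updateRow k (g s)).det) s := by
        intro s
        have : ∀ r : Fin (n+1) → ℝ, (M.updateRow k r).det = ∑ j, r j * M.adjugate j k := by
          intro r
          rw [Matrix.det_eq_sum_mul_adjugate_row _ k]
          refine Finset.sum_congr rfl fun j _ => ?_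
          rw [Matrix.adjugate_apply, Matrix.adjugate_apply, Matrix.updateRow_idem,
            Matrix.updateRow_self]
        simp only [H, this]
        exact HasDerivAt.fun_sum fun j _ => (hP s j).mul_const _
      have hmono : StrictMonoOn H (Set.Icc (w k) (u k)) := by
        refine strictMonoOn_of_deriv_pos (convex_Icc _ _)
          (fun s _ => (hH s).continuousAt.continuousWithinAt) ?_
        intro s hs
        rw [interior_Icc] at hs
        rw [(hH s).deriv]
        have := ih (Function.update ξ k s) (by
          intro i
          by_cases hik : i = k
          · subst hik; simpa using hs
          · simpa [hik] using hξ i)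
        convert this using 2
        ext i j
        by_cases hik : i = k
        · subst hik; simp [hk]
        · simp [M, hik]
      rw [e2]
      exact sub_pos.2 (hmono (Set.left_mem_Icc.2 (hwu k).le) (Set.right_mem_Icc.2 (hwu k).le) (hwu k))
  have := key Finset.univ (fun i => (w i + u i) / 2) (fun i => by
    have := hwu i; constructor <;> linarith)
  simp only [Finset.mem_univ, if_true] at this
  rw [Matrix.det_eq_of_forall_row_eq_smul_add_pred (fun _ => 1)
    (B := Matrix.of fun i j => P (u i) j - P (w i) j)]
  · exact this
  · intro j
    simp [P, hw0]
  · intro i j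
    simp [P, hws]
noncomputable def ph0 (N : ℕ) (r : ℝ) : ℝ := r * (r ^ (2 * N) / (1 + r ^ (2 * N)))
noncomputable def ph1 (N : ℕ) (r : ℝ) : ℝ := ∫ s in (0:ℝ)..r, ph0 N s
noncomputable def ph2 (N : ℕ) (r : ℝ) : ℝ := ∫ s in (0:ℝ)..r, ph1 N s

theorem pow2_nonneg' (N : ℕ) (r : ℝ) : 0 ≤ r ^ (2 * N) := by
  rw [pow_mul]; positivity

theorem ph0_cont (N : ℕ) : Continuous (ph0 N) := by
  unfold ph0
  refine continuous_id.mul (Continuous.div (by fun_prop) (by fun_prop) fun r => ?_)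
  have := pow2_nonneg' N r
  positivity

theorem ph1_deriv (N : ℕ) (r : ℝ) : HasDerivAt (ph1 N) (ph0 N r) r :=
  ((ph0_cont N).integral_hasStrictDerivAt 0 r).hasDerivAt

theorem ph1_cont (N : ℕ) : Continuous (ph1 N) :=
  continuous_iff_continuousAt.2 fun r => (ph1_deriv N r).continuousAt

theorem ph2_cont (N : ℕ) : Continuous (ph2 N) :=
  continuous_iff_continuousAt.2 fun r =>
    ((ph1_cont N).integral_hasStrictDerivAt 0 r).hasDerivAt.continuousAt

theorem ph0_tp (N : ℕ) (hN : N ≠ 0) : TPm (ph0 N) := by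
  refine (TPm.cauchy (2 * N) (by omega)).scale (fun u => u) (fun v => v⁻¹) (fun u h => h)
    (fun v h => inv_pos.2 h) ?_
  intro u v hu hv
  unfold ph0
  ring

theorem ph1_tp (N : ℕ) (hN : N ≠ 0) : TPm (ph1 N) := (ph0_tp N hN).integral (ph0_cont N)
theorem ph2_tp (N : ℕ) (hN : N ≠ 0) : TPm (ph2 N) := (ph1_tp N hN).integral (ph1_cont N)

theorem ph0_bound (N : ℕ) (s : ℝ) : ‖ph0 N s‖ ≤ |s| := by
  unfold ph0
  have h := pow2_nonneg' N s
  rw [Real.norm_eq_abs, abs_mul, abs_of_nonneg (div_nonneg h (by positivity))]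
  refine mul_le_of_le_one_right (abs_nonneg _) ?_
  rw [div_le_one (by positivity)]; linarith

theorem ph0_lim (s : ℝ) (hs : 0 < s) (hs1 : s ≠ 1) :
    Filter.Tendsto (fun N => ph0 N s) Filter.atTop (nhds (if 1 < s then s else 0)) := by
  unfold ph0
  split_ifs with h
  · have h1 : Filter.Tendsto (fun N : ℕ => (s⁻¹ ^ 2) ^ N) Filter.atTop (nhds 0) :=
      tendsto_pow_atTop_nhds_zero_of_lt_one (by positivity)
        (by have : s⁻¹ < 1 := inv_lt_one_of_one_lt₀ h
            have : 0 < s⁻¹ := by positivity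
            nlinarith)
    have h2 : Filter.Tendsto (fun N : ℕ => s * (1 / ((s⁻¹ ^ 2) ^ N + 1))) Filter.atTop
        (nhds (s * (1 / (0 + 1)))) :=
      (tendsto_const_nhds.div (h1.add_const 1) (by norm_num)).const_mul s
    simp only [zero_add, div_one, mul_one] at h2
    refine h2.congr fun N => ?_
    rw [← pow_mul, inv_pow]
    have : 0 < s ^ (2 * N) := by positivity
    field_simp
  · have h' : s < 1 := lt_of_le_of_ne (not_lt.1 h) hs1
    have h1 : Filter.Tendsto (fun N : ℕ => (s ^ 2) ^ N) Filter.atTop (nhds 0) :=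
      tendsto_pow_atTop_nhds_zero_of_lt_one (by positivity) (by nlinarith)
    have h2 : Filter.Tendsto (fun N : ℕ => s * ((s ^ 2) ^ N / (1 + (s ^ 2) ^ N))) Filter.atTop
        (nhds (s * (0 / (1 + 0)))) :=
      (h1.div (h1.const_add 1) (by norm_num)).const_mul s
    simp only [zero_div, mul_zero] at h2
    simpa only [pow_mul] using h2

theorem ph1_lim (r : ℝ) (hr : 0 ≤ r) :
    Filter.Tendsto (fun N => ph1 N r) Filter.atTop
      (nhds (if 1 < r then (r ^ 2 - 1) / 2 else 0)) := by
  have key : Filter.Tendsto (fun N => ph1 N r) Filter.atTop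
      (nhds (∫ s in (0:ℝ)..r, if 1 < s then s else 0)) := by
    refine intervalIntegral.tendsto_integral_filter_of_dominated_convergence (fun s => |s|)
      (Filter.Eventually.of_forall fun N => (ph0_cont N).aestronglyMeasurable)
      (Filter.Eventually.of_forall fun N => Filter.Eventually.of_forall fun s _ => ph0_bound N s)
      (continuous_abs.intervalIntegrable _ _) ?_
    have : ∀ᵐ s : ℝ, s ≠ 1 := by
      simp [MeasureTheory.ae_iff]
    filter_upwards [this] with s hs hs'
    rw [Set.uIoc_of_le hr] at hs'
    exact ph0_lim s hs'.1 hs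
  have z : ∀ r : ℝ, 0 ≤ r → r ≤ 1 → ∫ s in (0:ℝ)..r, (if 1 < s then s else 0) = 0 := by
    intro r hr hr1
    rw [intervalIntegral.integral_congr (g := fun _ => (0:ℝ))]
    · simp
    · intro s hs
      rw [Set.uIcc_of_le hr] at hs
      simp [not_lt.2 (hs.2.trans hr1)]
  have hi : ∀ a b : ℝ, IntervalIntegrable (fun s : ℝ => if 1 < s then s else 0)
      MeasureTheory.volume a b := by
    intro a b
    refine (continuous_id.intervalIntegrable a b).mono_fun ?_ ?_
    · exact (Measurable.ite measurableSet_Ioi measurable_id measurable_const).aestronglyMeasurable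
    · refine Filter.Eventually.of_forall fun s => ?_
      dsimp only
      split_ifs <;> simp
  convert key using 2
  split_ifs with h
  · rw [← intervalIntegral.integral_add_adjacent_intervals (hi 0 1) (hi 1 r), z 1 zero_le_one le_rfl,
      intervalIntegral.integral_congr_ae (g := fun s => s)]
    · simp
    · refine Filter.Eventually.of_forall fun s hs => ?_
      rw [Set.uIoc_of_le h.le] at hs
      simp [hs.1]
  · exact (z r hr (not_lt.1 h)).symm

theorem ph1_bound (N : ℕ) (r s : ℝ) (hs : 0 ≤ s) (hsr : s ≤ r) : ‖ph1 N s‖ ≤ r * r := by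
  have := intervalIntegral.norm_integral_le_of_norm_le_const (a := 0) (b := s) (C := r)
    (f := ph0 N) (by
      intro x hx
      rw [Set.uIoc_of_le hs] at hx
      refine (ph0_bound N x).trans ?_
      rw [abs_of_pos hx.1]; exact hx.2.trans hsr)
  rw [sub_zero, abs_of_nonneg hs] at this
  exact this.trans (mul_le_mul_of_nonneg_left hsr (hs.trans hsr))

theorem ph2_lim (r : ℝ) (hr : 1 < r) :
    Filter.Tendsto (fun N => ph2 N r) Filter.atTop
      (nhds ((r ^ 3 - 1) / 6 - (r - 1) / 2)) := by
  have hr0 : 0 ≤ r := by linarith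
  have key : Filter.Tendsto (fun N => ph2 N r) Filter.atTop
      (nhds (∫ s in (0:ℝ)..r, if 1 < s then (s ^ 2 - 1) / 2 else 0)) := by
    refine intervalIntegral.tendsto_integral_filter_of_dominated_convergence (fun s => r * r)
      (Filter.Eventually.of_forall fun N => (ph1_cont N).aestronglyMeasurable)
      (Filter.Eventually.of_forall fun N => Filter.Eventually.of_forall fun s hs => ?_)
      (continuous_const.intervalIntegrable _ _) ?_
    · rw [Set.uIoc_of_le hr0] at hs
      exact ph1_bound N r s hs.1.le hs.2
    · refine Filter.Eventually.of_forall fun s hs => ?_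
      rw [Set.uIoc_of_le hr0] at hs
      exact ph1_lim s hs.1.le
  have hi : ∀ a b : ℝ, IntervalIntegrable (fun s : ℝ => if 1 < s then (s ^ 2 - 1) / 2 else 0)
      MeasureTheory.volume a b := by
    intro a b
    refine ((by fun_prop : Continuous fun s : ℝ => (s ^ 2 - 1) / 2).intervalIntegrable a b).mono_fun
      ?_ ?_
    · exact (Measurable.ite measurableSet_Ioi (by fun_prop) measurable_const).aestronglyMeasurable
    · refine Filter.Eventually.of_forall fun s => ?_
      dsimp only
      split_ifs <;> simp <;> positivity
  convert key using 2
  rw [← intervalIntegral.integral_add_adjacent_intervals (hi 0 1) (hi 1 r),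
    intervalIntegral.integral_congr (g := fun _ => (0:ℝ)) (a := 0),
    intervalIntegral.integral_congr_ae (g := fun s => (s ^ 2 - 1) / 2) (a := 1)]
  · rw [intervalIntegral.integral_div, intervalIntegral.integral_sub (by simp) (by simp)]
    simp
    ring
  · refine Filter.Eventually.of_forall fun s hs => ?_
    rw [Set.uIoc_of_le hr.le] at hs
    simp [hs.1]
  · intro s hs
    rw [Set.uIcc_of_le zero_le_one] at hs
    simp [not_lt.2 hs.2]
def Pres (X Y : Set ℝ) (F : ℝ → ℝ) : Prop :=
  ∀ K : X → Y → ℝ, (∃ f : ℝ → ℝ, ∀ (a : X) (b : Y), K a b = f ((a : ℝ) - (b : ℝ))) →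
        IsTPKernel K →
        ((∃ g : ℝ → ℝ, ∀ (a : X) (b : Y), F (K a b) = g ((a : ℝ) - (b : ℝ))) ∧
          IsTPKernel fun a b => F (K a b))

theorem Pres.restrict {X Y : Set ℝ} {F : ℝ → ℝ} (h : Pres X Y F) {φ : ℝ → ℝ} (hφ : TPm φ)
    {θ : ℝ} (hθ : 0 < θ) (t0 : ℝ) (n : ℕ) (x : Fin n → X) (y : Fin n → Y) (hx : StrictMono x)
    (hy : StrictMono y) :
    0 < (Matrix.of fun i j : Fin n =>
      F (φ (Real.exp (θ * ((x i : ℝ) - (y j : ℝ) - t0))))).det := by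
  refine (h (fun a b => φ (Real.exp (θ * ((a : ℝ) - (b : ℝ) - t0))))
    ⟨fun t => φ (Real.exp (θ * (t - t0))), fun a b => rfl⟩ ?_).2 n x y hx hy
  intro m a b ha hb
  have := hφ m (fun i => Real.exp (θ * ((a i : ℝ) - t0))) (fun j => Real.exp (θ * (b j : ℝ)))
    (fun i => Real.exp_pos _) (fun i => Real.exp_pos _)
    (fun i j hij => Real.exp_lt_exp.2 (mul_lt_mul_of_pos_left
      (sub_lt_sub_right (Subtype.coe_lt_coe.2 (ha hij)) _) hθ))
    (fun i j hij => Real.exp_lt_exp.2 (mul_lt_mul_of_pos_left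
      (Subtype.coe_lt_coe.2 (hb hij)) hθ))
  convert this using 6
  rw [← Real.exp_sub]
  congr 1
  ring

theorem Pres.two {X Y : Set ℝ} (hXY : AdmissiblePair X Y) {F : ℝ → ℝ} (h : Pres X Y F)
    {a b c : ℝ} (ha : 0 < a) (hb : 0 < b) (hc : 0 < c) (habc : b * c < a ^ 2) :
    F b * F c < F a ^ 2 := by
  obtain ⟨x, y, d, hd, hx, hy⟩ := hXY 2 le_rfl
  obtain ⟨p, hp, rfl⟩ : ∃ p : ℝ, 0 < p ∧ b = p ^ 2 :=
    ⟨√b, Real.sqrt_pos.2 hb, (Real.sq_sqrt hb.le).symm⟩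
  obtain ⟨q, hq, rfl⟩ : ∃ q : ℝ, 0 < q ∧ c = q ^ 2 :=
    ⟨√c, Real.sqrt_pos.2 hc, (Real.sq_sqrt hc.le).symm⟩
  have hpq : p * q < a := by
    rw [← mul_pow] at habc
    exact lt_of_pow_lt_pow_left₀ 2 ha.le habc
  set k := a / (p * q) with hk
  have hk1 : 1 < k := by rw [hk, one_lt_div (by positivity)]; exact hpq
  obtain ⟨z, hz1, hz⟩ : ∃ z : ℝ, 1 < z ∧ 1 + z ^ 2 = 2 * k * z := by
    refine ⟨k + √(k ^ 2 - 1), by have := Real.sqrt_nonneg (k ^ 2 - 1); linarith, ?_⟩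
    have := Real.sq_sqrt (show 0 ≤ k ^ 2 - 1 by nlinarith)
    nlinarith
  have hz0 : 0 < z := by linarith
  have hlz : 0 < Real.log z := Real.log_pos hz1
  set β := Real.log (q / p) / Real.log z with hβ
  have hzβ : z ^ β = q / p := by
    rw [Real.rpow_def_of_pos hz0, hβ, mul_div_cancel₀ _ hlz.ne', Real.exp_log (by positivity)]
  let ψ : ℝ → ℝ := fun r => (2 * a) * (r ^ β * (r ^ (-1:ℝ) * (r ^ 2 / (1 + r ^ 2))))
  have hψ : TPm ψ := (((TPm.cauchy 2 two_ne_zero).rpow (-1)).rpow β).const_mul (by positivity)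
  have e1 : ψ 1 = a := by simp [ψ]; ring
  have e2 : ψ z = q ^ 2 := by
    simp only [ψ]
    rw [hzβ, hz, Real.rpow_neg_one, hk]
    field_simp
  have e3 : ψ z⁻¹ = p ^ 2 := by
    simp only [ψ]
    rw [Real.inv_rpow hz0.le, hzβ, Real.rpow_neg_one]
    have : z⁻¹ ^ 2 / (1 + z⁻¹ ^ 2) = 1 / (1 + z ^ 2) := by
      field_simp
      ring
    rw [this, hz, hk]
    field_simp
  have hx0 := hx 0 (by norm_num)
  have hx1 := hx 1 (by norm_num)
  have hy0 := hy 0 (by norm_num)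
  have hy1 := hy 1 (by norm_num)
  have := h.restrict hψ (θ := Real.log z / d) (by positivity) (x - y) 2
    ![⟨_, hx0⟩, ⟨_, hx1⟩] ![⟨_, hy0⟩, ⟨_, hy1⟩]
    (by
      intro i j hij
      fin_cases i <;> fin_cases j <;> simp_all [← Subtype.coe_lt_coe])
    (by
      intro i j hij
      fin_cases i <;> fin_cases j <;> simp_all [← Subtype.coe_lt_coe])
  rw [Matrix.det_fin_two] at this
  simp only [Matrix.of_apply, Matrix.cons_val_zero, Matrix.cons_val_one] at this
  have f1 : Real.log z / d * (x + (0:ℕ) * d - (y + (0:ℕ) * d) - (x - y)) = 0 := by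
    push_cast; ring
  have f2 : Real.log z / d * (x + (1:ℕ) * d - (y + (1:ℕ) * d) - (x - y)) = 0 := by
    push_cast; ring
  have f3 : Real.log z / d * (x + (0:ℕ) * d - (y + (1:ℕ) * d) - (x - y)) = - Real.log z := by
    push_cast; field_simp; ring
  have f4 : Real.log z / d * (x + (1:ℕ) * d - (y + (0:ℕ) * d) - (x - y)) = Real.log z := by
    push_cast; field_simp; ring
  rw [f1, f2, f3, f4, Real.exp_zero, Real.exp_neg, Real.exp_log hz0, e1, e2, e3] at this
  linarith

open Filter Topology in
theorem Pres.grid {X Y : Set ℝ} (hXY : AdmissiblePair X Y) {F : ℝ → ℝ} (h : Pres X Y F)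
    (hF : ∀ x, 0 < x → ContinuousAt F x) {φ : ℝ → ℝ} (hφ : TPm φ)
    (hφc : ∀ r, 0 < r → ContinuousAt φ r) (n : ℕ) (u v : Fin n → ℝ)
    (hu : ∀ i, 0 < u i) (hv : ∀ j, 0 < v j) (hmu : StrictMono u) (hmv : StrictMono v) :
    0 ≤ (Matrix.of fun i j : Fin n => F (φ (u i / v j))).det := by
  obtain ⟨S, hSu, hSv⟩ : ∃ S : ℝ, (∀ i, 0 ≤ Real.log (u i) + S) ∧ ∀ i, 0 ≤ Real.log (v i) + S := by
    refine ⟨∑ i, |Real.log (u i)| + ∑ i, |Real.log (v i)|, fun i => ?_, fun i => ?_⟩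
    · have h1 := Finset.single_le_sum (f := fun i => |Real.log (u i)|) (fun i _ => abs_nonneg _)
        (Finset.mem_univ i)
      have h2 : 0 ≤ ∑ i, |Real.log (v i)| := Finset.sum_nonneg fun i _ => abs_nonneg _
      have := neg_abs_le (Real.log (u i))
      linarith
    · have h1 := Finset.single_le_sum (f := fun i => |Real.log (v i)|) (fun i _ => abs_nonneg _)
        (Finset.mem_univ i)
      have h2 : 0 ≤ ∑ i, |Real.log (u i)| := Finset.sum_nonneg fun i _ => abs_nonneg _
      have := neg_abs_le (Real.log (v i))
      linarith
  set x : Fin n → ℝ := fun i => Real.log (u i) + S with hxdef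
  set y : Fin n → ℝ := fun i => Real.log (v i) + S with hydef
  have hxm : StrictMono x := fun i j hij => by
    have := Real.log_lt_log (hu i) (hmu hij)
    simp only [hxdef]; linarith
  have hym : StrictMono y := fun i j hij => by
    have := Real.log_lt_log (hv i) (hmv hij)
    simp only [hydef]; linarith
  have hfl : ∀ w : Fin n → ℝ, (∀ i, 0 ≤ w i) → StrictMono w →
      ∀ᶠ m : ℕ in atTop, StrictMono (fun i => ⌊w i * (m:ℝ)⌋₊) := by
    intro w hw0 hw
    have : ∀ᶠ m : ℕ in atTop, ∀ i j, i < j → 1 ≤ (w j - w i) * m := by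
      rw [eventually_all]; intro i
      rw [eventually_all]; intro j
      by_cases hij : i < j
      · have h0 : 0 < w j - w i := sub_pos.2 (hw hij)
        have : Tendsto (fun m : ℕ => (w j - w i) * (m:ℝ)) atTop atTop :=
          (tendsto_natCast_atTop_atTop).const_mul_atTop h0
        filter_upwards [this.eventually_ge_atTop 1] with m hm _ using hm
      · simp [hij]
    filter_upwards [this] with m hm i j hij
    have h1 := hm i j hij
    have h2 : w i * m + 1 ≤ w j * m := by linarith
    have h3 := Nat.floor_le_floor h2
    rw [Nat.floor_add_one (mul_nonneg (hw0 i) (Nat.cast_nonneg _))] at h3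
    exact h3
  have hpos : ∀ᶠ m : ℕ in atTop, 0 ≤ (Matrix.of fun i j : Fin n =>
      F (φ (Real.exp ((⌊x i * (m:ℝ)⌋₊ : ℝ) / m - (⌊y j * (m:ℝ)⌋₊ : ℝ) / m)))).det := by
    filter_upwards [hfl x hSu hxm, hfl y hSv hym, eventually_gt_atTop 0] with m hm1 hm2 hm0
    obtain ⟨x0, y0, d, hd, hX, hY⟩ := hXY
      (∑ i, ⌊x i * (m:ℝ)⌋₊ + ∑ i, ⌊y i * (m:ℝ)⌋₊ + 2) (by omega)
    have hm0' : (0:ℝ) < m := by exact_mod_cast hm0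
    have hXm : ∀ i, x0 + (⌊x i * (m:ℝ)⌋₊ : ℕ) * d ∈ X := by
      intro i
      refine hX _ ?_
      have h1 := Finset.single_le_sum (f := fun i => ⌊x i * (m:ℝ)⌋₊) (fun i _ => Nat.zero_le _)
        (Finset.mem_univ i)
      omega
    have hYm : ∀ i, y0 + (⌊y i * (m:ℝ)⌋₊ : ℕ) * d ∈ Y := by
      intro i
      refine hY _ ?_
      have h1 := Finset.single_le_sum (f := fun i => ⌊y i * (m:ℝ)⌋₊) (fun i _ => Nat.zero_le _)
        (Finset.mem_univ i)
      omega
    have := h.restrict hφ (θ := 1 / (d * m)) (by positivity) (x0 - y0) n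
      (fun i => ⟨_, hXm i⟩) (fun i => ⟨_, hYm i⟩)
      (fun i j hij => by
        rw [← Subtype.coe_lt_coe]
        have : (⌊x i * (m:ℝ)⌋₊ : ℝ) < (⌊x j * (m:ℝ)⌋₊ : ℝ) := by exact_mod_cast hm1 hij
        simp only
        gcongr)
      (fun i j hij => by
        rw [← Subtype.coe_lt_coe]
        have : (⌊y i * (m:ℝ)⌋₊ : ℝ) < (⌊y j * (m:ℝ)⌋₊ : ℝ) := by exact_mod_cast hm2 hij
        simp only
        gcongr)
    have e : ∀ i j, 1 / (d * m) * ((x0 + (⌊x i * (m:ℝ)⌋₊ : ℕ) * d) - (y0 + (⌊y j * (m:ℝ)⌋₊ : ℕ) * d)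
        - (x0 - y0)) = (⌊x i * (m:ℝ)⌋₊ : ℝ) / m - (⌊y j * (m:ℝ)⌋₊ : ℝ) / m := by
      intro i j
      field_simp
      ring
    simp only [e] at this
    exact this.le
  have hlim : Tendsto (fun m : ℕ => (Matrix.of fun i j : Fin n =>
      F (φ (Real.exp ((⌊x i * (m:ℝ)⌋₊ : ℝ) / m - (⌊y j * (m:ℝ)⌋₊ : ℝ) / m)))).det) atTop
      (𝓝 (Matrix.of fun i j : Fin n => F (φ (u i / v j))).det) := by
    refine ((continuous_id.matrix_det).tendsto _).comp ?_
    refine tendsto_pi_nhds.2 ?_; intro i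
    refine tendsto_pi_nhds.2 ?_; intro j
    have h1 : Tendsto (fun m : ℕ => (⌊x i * (m:ℝ)⌋₊ : ℝ) / m - (⌊y j * (m:ℝ)⌋₊ : ℝ) / m) atTop
        (𝓝 (x i - y j)) :=
      ((tendsto_nat_floor_mul_div_atTop (hSu i)).comp tendsto_natCast_atTop_atTop).sub
        ((tendsto_nat_floor_mul_div_atTop (hSv j)).comp tendsto_natCast_atTop_atTop)
    have h2 : Real.exp (x i - y j) = u i / v j := by
      simp only [hxdef, hydef, add_sub_add_right_eq_sub, Real.exp_sub, Real.exp_log (hu i),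
        Real.exp_log (hv j)]
    have huv : 0 < u i / v j := div_pos (hu i) (hv j)
    have h3 := (Real.continuous_exp.tendsto (x i - y j)).comp h1
    rw [h2] at h3
    exact ((hF _ (hφ.pos huv)).tendsto.comp (hφc _ huv).tendsto).comp h3
  exact ge_of_tendsto hlim hpos

open Filter Topology in
/-- Limit kernels. -/
theorem Pres.grid_lim {X Y : Set ℝ} (hXY : AdmissiblePair X Y) {F : ℝ → ℝ} (h : Pres X Y F)
    (hF : ∀ x, 0 < x → ContinuousAt F x) {φ : ℕ → ℝ → ℝ} (hφ : ∀ N, N ≠ 0 → TPm (φ N))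
    (hφc : ∀ N r, 0 < r → ContinuousAt (φ N) r) (f : ℝ → ℝ)
    (hf : ∀ r, 1 < r → 0 < f r ∧ Tendsto (fun N => φ N r) atTop (𝓝 (f r)))
    (n : ℕ) (u v : Fin n → ℝ)
    (hu : ∀ i, 0 < u i) (hv : ∀ j, 0 < v j) (hmu : StrictMono u) (hmv : StrictMono v)
    (huv : ∀ i j, v j < u i) :
    0 ≤ (Matrix.of fun i j : Fin n => F (f (u i / v j))).det := by
  have hpos : ∀ᶠ N : ℕ in atTop, 0 ≤ (Matrix.of fun i j : Fin n => F (φ N (u i / v j))).det := by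
    filter_upwards [eventually_ne_atTop 0] with N hN
    exact h.grid hXY hF (hφ N hN) (hφc N) n u v hu hv hmu hmv
  refine ge_of_tendsto ?_ hpos
  refine ((continuous_id.matrix_det).tendsto _).comp ?_
  refine tendsto_pi_nhds.2 ?_; intro i
  refine tendsto_pi_nhds.2 ?_; intro j
  have := hf (u i / v j) ((one_lt_div (hv j)).2 (huv i j))
  exact (hF _ this.1).tendsto.comp this.2

open Filter Topology in
theorem Pres.testB {X Y : Set ℝ} (hXY : AdmissiblePair X Y) {F : ℝ → ℝ} (h : Pres X Y F)
    (hF : ∀ x, 0 < x → ContinuousAt F x) {A : ℝ} (hA : 0 < A) (n : ℕ) (u v : Fin n → ℝ)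
    (hu : ∀ i, 0 < u i) (hv : ∀ j, 0 < v j) (hmu : StrictMono u) (hmv : StrictMono v)
    (huv : ∀ i j, v j < u i) :
    0 ≤ (Matrix.of fun i j : Fin n => F (A * (1 - (v j / u i) ^ 2))).det := by
  have := h.grid_lim hXY hF (φ := fun N r => (2 * A) * (r ^ (-2:ℝ) * ph1 N r))
    (fun N hN => ((ph1_tp N hN).rpow _).const_mul (by positivity))
    (fun N r hr => continuousAt_const.mul ((Real.continuousAt_rpow_const _ _ (Or.inl hr.ne')).mul
      (ph1_cont N).continuousAt)) (fun r => A * (1 - (r⁻¹) ^ 2)) ?_ n u v hu hv hmu hmv huv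
  · simpa using this
  · intro r hr
    have hr0 : 0 < r := by linarith
    constructor
    · have h1 : r⁻¹ < 1 := inv_lt_one_of_one_lt₀ hr
      have h2 : 0 < r⁻¹ := by positivity
      have : 0 < 1 - r⁻¹ ^ 2 := by nlinarith
      positivity
    · have := ((ph1_lim r hr0.le).const_mul (r ^ (-2:ℝ))).const_mul (2 * A)
      convert this using 2
      rw [if_pos hr, Real.rpow_neg hr0.le, show (2:ℝ) = ((2:ℕ):ℝ) by norm_num, Real.rpow_natCast]
      field_simp

open Filter Topology in
theorem Pres.testC {X Y : Set ℝ} (hXY : AdmissiblePair X Y) {F : ℝ → ℝ} (h : Pres X Y F)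
    (hF : ∀ x, 0 < x → ContinuousAt F x) {A : ℝ} (hA : 0 < A) (n : ℕ) (u v : Fin n → ℝ)
    (hu : ∀ i, 0 < u i) (hv : ∀ j, 0 < v j) (hmu : StrictMono u) (hmv : StrictMono v)
    (huv : ∀ i j, v j < u i) :
    0 ≤ (Matrix.of fun i j : Fin n =>
      F (A * (1 - (3 * (v j / u i) ^ 2 - 2 * (v j / u i) ^ 3)))).det := by
  have := h.grid_lim hXY hF (φ := fun N r => (6 * A) * (r ^ (-3:ℝ) * ph2 N r))
    (fun N hN => ((ph2_tp N hN).rpow _).const_mul (by positivity))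
    (fun N r hr => continuousAt_const.mul ((Real.continuousAt_rpow_const _ _ (Or.inl hr.ne')).mul
      (ph2_cont N).continuousAt)) (fun r => A * (1 - (3 * (r⁻¹) ^ 2 - 2 * (r⁻¹) ^ 3)))
      ?_ n u v hu hv hmu hmv huv
  · simpa using this
  · intro r hr
    have hr0 : 0 < r := by linarith
    constructor
    · have h1 : r⁻¹ < 1 := inv_lt_one_of_one_lt₀ hr
      have h2 : 0 < r⁻¹ := by positivity
      have : 1 - (3 * (r⁻¹) ^ 2 - 2 * (r⁻¹) ^ 3) = (1 - r⁻¹) ^ 2 * (1 + 2 * r⁻¹) := by ring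
      rw [this]
      have : 0 < 1 - r⁻¹ := by linarith
      positivity
    · have := ((ph2_lim r hr).const_mul (r ^ (-3:ℝ))).const_mul (6 * A)
      convert this using 2
      rw [Real.rpow_neg hr0.le, show (3:ℝ) = ((3:ℕ):ℝ) by norm_num, Real.rpow_natCast]
      field_simp
      push_cast
      ring

section gfun
open Filter Topology

theorem concave_of_two {g : ℝ → ℝ} (h2 : ∀ u v w, v + w < 2 * u → g v + g w < 2 * g u) :
    StrictMono g ∧ Continuous g ∧ ConcaveOn ℝ Set.univ g := by
  have hm : StrictMono g := fun v u hvu => by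
    have := h2 u v v (by linarith)
    linarith
  have hc : Continuous g := by
    rw [continuous_iff_continuousAt]
    intro u
    rw [hm.monotone.continuousAt_iff_leftLim_eq_rightLim]
    refine le_antisymm (hm.monotone.leftLim_le_rightLim le_rfl) ?_
    have l1 : Tendsto (fun d : ℝ => u - d) (𝓝[>] 0) (𝓝[<] u) := by
      refine tendsto_nhdsWithin_iff.2 ⟨?_, ?_⟩
      · refine ((by fun_prop : Continuous fun d : ℝ => u - d).tendsto' 0 u (by simp)).mono_left
          nhdsWithin_le_nhds
      · filter_upwards [self_mem_nhdsWithin] with d hd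
        simpa using hd
    have l2 : Tendsto (fun d : ℝ => u - 4 * d) (𝓝[>] 0) (𝓝[<] u) := by
      refine tendsto_nhdsWithin_iff.2 ⟨?_, ?_⟩
      · refine ((by fun_prop : Continuous fun d : ℝ => u - 4 * d).tendsto' 0 u (by simp)).mono_left
          nhdsWithin_le_nhds
      · filter_upwards [self_mem_nhdsWithin] with d hd
        simpa using hd
    have l3 : Tendsto (fun d : ℝ => u + d) (𝓝[>] 0) (𝓝[>] u) := by
      refine tendsto_nhdsWithin_iff.2 ⟨?_, ?_⟩
      · refine ((by fun_prop : Continuous fun d : ℝ => u + d).tendsto' 0 u (by simp)).mono_left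
          nhdsWithin_le_nhds
      · filter_upwards [self_mem_nhdsWithin] with d hd
        simpa using hd
    have m1 := (hm.monotone.tendsto_leftLim u).comp l1
    have m2 := (hm.monotone.tendsto_leftLim u).comp l2
    have m3 := (hm.monotone.tendsto_rightLim u).comp l3
    have := le_of_tendsto_of_tendsto (m3.add m2) (m1.const_mul 2) (by
      filter_upwards [self_mem_nhdsWithin] with d hd
      have hd : 0 < d := hd
      exact (h2 (u - d) (u + d) (u - 4 * d) (by linarith)).le)
    linarith
  have hmid : ∀ u d, g (u + d) + g (u - d) ≤ 2 * g u := by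
    intro u d
    have l1 : Tendsto (fun e : ℝ => 2 * g (u + e)) (𝓝[>] 0) (𝓝 (2 * g u)) := by
      refine ((by fun_prop : Continuous fun e : ℝ => 2 * g (u + e)).tendsto' 0 _ (by simp)).mono_left
          nhdsWithin_le_nhds
    refine ge_of_tendsto l1 ?_
    filter_upwards [self_mem_nhdsWithin] with e he
    have he : 0 < e := he
    exact (h2 _ _ _ (by linarith)).le
  refine ⟨hm, hc, ?_⟩
  refine LinearOrder.concaveOn_of_lt convex_univ ?_
  intro x _ y _ hxy a b ha hb hab
  by_contra hcon
  push Not at hcon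
  simp only [smul_eq_mul] at hcon
  have hyx : 0 < y - x := sub_pos.2 hxy
  obtain ⟨m, hm'⟩ : ∃ m, m * (y - x) = g y - g x := ⟨(g y - g x) / (y - x), by field_simp⟩
  set H : ℝ → ℝ := fun z => g z - (g x + m * (z - x)) with hH
  have hHc : Continuous H := by simp only [hH]; fun_prop
  have hHx : H x = 0 := by simp [hH]
  have hHy : H y = 0 := by simp [hH, hm']
  have hz : H (a * x + b * y) < 0 := by
    simp only [hH]
    have e : a * x + b * y - x = b * (y - x) := by
      have : a = 1 - b := by linarith
      rw [this]; ring
    have e2 : m * (b * (y - x)) = b * (g y - g x) := by rw [← hm']; ring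
    have e3 : a * g x = g x - b * g x := by
      have : a = 1 - b := by linarith
      rw [this]; ring
    rw [e, e2]
    linarith
  have hzmem : a * x + b * y ∈ Set.Icc x y := by
    have : a = 1 - b := by linarith
    constructor
    · rw [this]; nlinarith
    · rw [show b = 1 - a by linarith]; nlinarith
  obtain ⟨z1, hz1, hmin⟩ := isCompact_Icc.exists_isMinOn ⟨_, hzmem⟩ hHc.continuousOn
  have hmin' : ∀ z ∈ Set.Icc x y, H z1 ≤ H z := fun z hz => hmin hz
  have hneg : H z1 < 0 := (hmin' _ hzmem).trans_lt hz
  have hZc : IsCompact (Set.Icc x y ∩ {z | H z ≤ H z1}) :=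
    isCompact_Icc.inter_right (isClosed_le hHc continuous_const)
  obtain ⟨z0, hz0, hleast⟩ := hZc.exists_isLeast ⟨z1, hz1, (le_refl (H z1) : H z1 ≤ H z1)⟩
  have hx0 : x < z0 := by
    refine lt_of_le_of_ne hz0.1.1 ?_
    rintro rfl
    have : H x ≤ H z1 := hz0.2
    linarith
  have hy0 : z0 < y := by
    refine lt_of_le_of_ne hz0.1.2 ?_
    rintro rfl
    have : H z0 ≤ H z1 := hz0.2
    linarith
  obtain ⟨d, hd, hd1, hd2⟩ : ∃ d, 0 < d ∧ d ≤ z0 - x ∧ d ≤ y - z0 :=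
    ⟨min (z0 - x) (y - z0), lt_min (by linarith) (by linarith), min_le_left _ _, min_le_right _ _⟩
  have i1 : H z1 ≤ H (z0 + d) := hmin' _ ⟨by linarith, by linarith⟩
  have i2 : H z1 < H (z0 - d) := by
    by_contra hc
    have := hleast ⟨⟨by linarith, by linarith⟩, not_lt.1 hc⟩
    linarith
  have i3 := hmid z0 d
  have i4 : H z0 ≤ H z1 := hz0.2
  simp only [hH] at i1 i2 i4
  linarith

end gfun

section local_analysis
open Filter Topology

/-- Local data at a point `A` coming from log-log concavity. -/
theorem local_data {F : ℝ → ℝ} (hF : ∀ x, 0 < x → 0 < F x)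
    (h2 : ∀ a b c : ℝ, 0 < a → 0 < b → 0 < c → b * c < a ^ 2 → F b * F c < F a ^ 2) :
    (∀ x, 0 < x → ContinuousAt F x) ∧
    ∀ A, 0 < A → ∃ α, 0 < α ∧
      (∀ δ, 0 < δ → δ < 1 → F (A * (1 - δ)) ≤ F A * Real.exp (-(α * δ))) ∧
      (∀ δ, 0 < δ → δ < 1 → F (A * (1 - δ)) ≤ F A * Real.exp (α * Real.log (1 - δ))) ∧
      Tendsto (fun δ => (F (A * (1 - δ)) - F A) / δ) (𝓝[>] 0) (𝓝 (-(F A * α))) := by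
  set g : ℝ → ℝ := fun t => Real.log (F (Real.exp t)) with hg
  have hFe : ∀ t, 0 < F (Real.exp t) := fun t => hF _ (Real.exp_pos t)
  have hg2 : ∀ u v w, v + w < 2 * u → g v + g w < 2 * g u := by
    intro u v w h
    have := h2 (Real.exp u) (Real.exp v) (Real.exp w) (Real.exp_pos _) (Real.exp_pos _)
      (Real.exp_pos _) (by
        rw [← Real.exp_add, ← Real.exp_nat_mul]
        exact Real.exp_lt_exp.2 (by push_cast; linarith))
    have h3 := Real.log_lt_log (mul_pos (hFe v) (hFe w)) this
    rw [Real.log_mul (hFe v).ne' (hFe w).ne', Real.log_pow] at h3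
    simp only [hg]
    push_cast at h3
    linarith
  obtain ⟨hm, hc, hcc⟩ := concave_of_two hg2
  have hFg : ∀ x, 0 < x → F x = Real.exp (g (Real.log x)) := by
    intro x hx
    simp only [hg]
    rw [Real.exp_log hx, Real.exp_log (hF x hx)]
  refine ⟨?_, ?_⟩
  · intro x hx
    have : ContinuousAt (fun x => Real.exp (g (Real.log x))) x :=
      Real.continuous_exp.continuousAt.comp (hc.continuousAt.comp (Real.continuousAt_log hx.ne'))
    refine this.congr ?_
    filter_upwards [lt_mem_nhds hx] with y hy
    exact (hFg y hy).symm
  · intro A hA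
    set t0 := Real.log A with ht0
    have hder : HasDerivWithinAt g (derivWithin g (Set.Iio t0) t0) (Set.Iio t0) t0 := by
      have := hcc.neg.hasDerivWithinAt_leftDeriv_of_mem_interior (x := t0) (by simp)
      have h3 := this.neg
      simp only [neg_neg] at h3
      exact h3.differentiableWithinAt.hasDerivWithinAt
    set α := derivWithin g (Set.Iio t0) t0
    have hle : ∀ t, t < t0 → g t ≤ g t0 + α * (t - t0) := by
      intro t ht
      have := hcc.le_slope_of_hasDerivWithinAt_Iio (Set.mem_univ t) (Set.mem_univ t0) ht hder
      rw [slope_def_field, le_div_iff₀ (by linarith)] at this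
      linarith
    have hα : 0 < α := by
      have hs := hasDerivWithinAt_iff_tendsto_slope.1 hder
      simp only [Set.mem_Iio, lt_self_iff_false, not_false_eq_true, Set.sdiff_singleton_eq_self] at hs
      have hlt : 0 < g (t0 + 1) - g t0 := sub_pos.2 (hm (by linarith))
      refine lt_of_lt_of_le hlt (ge_of_tendsto hs ?_)
      filter_upwards [self_mem_nhdsWithin] with t ht
      have ht : t < t0 := ht
      have := hcc.slope_anti_adjacent (Set.mem_univ t) (Set.mem_univ (t0 + 1)) ht
        (show t0 < t0 + 1 by linarith)
      rw [slope_comm, slope_def_field]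
      simpa using this
    refine ⟨α, hα, ?_, ?_, ?_⟩
    · intro δ hδ hδ1
      have h1 : 0 < 1 - δ := by linarith
      rw [hFg _ (mul_pos hA h1), hFg A hA, ← Real.exp_add, Real.log_mul hA.ne' h1.ne']
      refine Real.exp_le_exp.2 ?_
      have hlog : Real.log (1 - δ) ≤ -δ := by
        have := Real.log_le_sub_one_of_pos h1
        linarith
      have := hle (t0 + Real.log (1 - δ)) (by linarith)
      rw [← ht0]
      nlinarith
    · intro δ hδ hδ1
      have h1 : 0 < 1 - δ := by linarith
      rw [hFg _ (mul_pos hA h1), hFg A hA, ← Real.exp_add, Real.log_mul hA.ne' h1.ne']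
      refine Real.exp_le_exp.2 ?_
      have hlog : Real.log (1 - δ) ≤ -δ := by
        have := Real.log_le_sub_one_of_pos h1
        linarith
      have := hle (t0 + Real.log (1 - δ)) (by linarith)
      rw [← ht0]
      linarith
    · have hin : HasDerivAt (fun δ : ℝ => Real.log (A * (1 - δ))) (-1) 0 := by
        have h1 : HasDerivAt (fun δ : ℝ => A * (1 - δ)) (A * (-1)) 0 :=
          ((hasDerivAt_id (0:ℝ)).const_sub 1).const_mul A
        have h2 := h1.log (by simpa using hA.ne')
        convert h2 using 1
        field_simp
        simp
      have hmaps : Set.MapsTo (fun δ : ℝ => Real.log (A * (1 - δ))) (Set.Ioo 0 1) (Set.Iio t0) := by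
        intro δ hδ
        have h1 : 0 < 1 - δ := by linarith [hδ.2]
        exact Real.log_lt_log (mul_pos hA h1) (by nlinarith [hδ.1])
      have e0 : Real.log (A * (1 - 0)) = t0 := by simp [ht0]
      have hcomp : HasDerivWithinAt (fun δ : ℝ => g (Real.log (A * (1 - δ)))) (α * (-1))
          (Set.Ioo 0 1) 0 := by
        refine HasDerivWithinAt.comp (h₂ := g) (s' := Set.Iio t0) (0:ℝ) ?_ hin.hasDerivWithinAt hmaps
        rw [e0]; exact hder
      have hexp := hcomp.exp
      have hexp2 : HasDerivWithinAt (fun δ : ℝ => F (A * (1 - δ))) (-(F A * α)) (Set.Ioo 0 1) 0 := by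
        have : HasDerivWithinAt (fun δ : ℝ => F (A * (1 - δ)))
          (Real.exp (g (Real.log (A * (1 - 0)))) * (α * (-1))) (Set.Ioo 0 1) 0 := by
          refine hexp.congr (fun δ hδ => ?_) ?_
          · exact hFg _ (mul_pos hA (by linarith [hδ.2]))
          · exact hFg _ (by simpa using hA)
        convert this using 1
        rw [e0, ← hFg A hA]; ring
      have hs := hasDerivWithinAt_iff_tendsto_slope.1 hexp2
      have hset : Set.Ioo (0:ℝ) 1 \ {0} = Set.Ioo 0 1 := by
        refine Set.sdiff_singleton_eq_self (by simp)
      rw [hset, nhdsWithin_Ioo_eq_nhdsGT one_pos] at hs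
      refine hs.congr fun δ => ?_
      rw [slope_def_field]
      simp

end local_analysis
section dets
open Filter Topology

def dt3 (a b c d e f g h i : ℝ) : ℝ :=
  a * (e * i - f * h) - b * (d * i - f * g) + c * (d * h - e * g)

def dt4 (a b c d : Fin 4 → ℝ) : ℝ :=
  a 0 * dt3 (b 1) (b 2) (b 3) (c 1) (c 2) (c 3) (d 1) (d 2) (d 3)
  - a 1 * dt3 (b 0) (b 2) (b 3) (c 0) (c 2) (c 3) (d 0) (d 2) (d 3)
  + a 2 * dt3 (b 0) (b 1) (b 3) (c 0) (c 1) (c 3) (d 0) (d 1) (d 3)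
  - a 3 * dt3 (b 0) (b 1) (b 2) (c 0) (c 1) (c 2) (d 0) (d 1) (d 2)

theorem dt4_eq (M : Matrix (Fin 4) (Fin 4) ℝ) : M.det = dt4 (M 0) (M 1) (M 2) (M 3) := by
  rw [Matrix.det_succ_row_zero]
  simp [Fin.sum_univ_four, Matrix.det_fin_three, dt4, dt3, Fin.succAbove]
  ring

theorem dt4_cont : Continuous fun q : (Fin 4 → ℝ) × (Fin 4 → ℝ) × (Fin 4 → ℝ) × (Fin 4 → ℝ) =>
    dt4 q.1 q.2.1 q.2.2.1 q.2.2.2 := by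
  unfold dt4 dt3
  fun_prop

theorem dt4_tendsto {ι : Type*} {l : Filter ι} {a b c d : ι → Fin 4 → ℝ} {a' b' c' d' : Fin 4 → ℝ}
    (ha : Tendsto a l (𝓝 a')) (hb : Tendsto b l (𝓝 b')) (hc : Tendsto c l (𝓝 c'))
    (hd : Tendsto d l (𝓝 d')) :
    Tendsto (fun t => dt4 (a t) (b t) (c t) (d t)) l (𝓝 (dt4 a' b' c' d')) :=
  (dt4_cont.tendsto (a', b', c', d')).comp
    (ha.prodMk_nhds (hb.prodMk_nhds (hc.prodMk_nhds hd)))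

theorem scaled_lim {f : ℝ → ℝ} {L w : ℝ} (hf : Tendsto f (𝓝[>] 0) (𝓝 L)) (hw : 0 < w) :
    Tendsto (fun p => f (p * w)) (𝓝[>] 0) (𝓝 L) := by
  refine hf.comp (tendsto_nhdsWithin_iff.2 ⟨?_, ?_⟩)
  · exact ((by fun_prop : Continuous fun p : ℝ => p * w).tendsto' 0 0 (by simp)).mono_left
      nhdsWithin_le_nhds
  · filter_upwards [self_mem_nhdsWithin] with p hp
    exact mul_pos hp hw

theorem below_tangent {H : ℝ → ℝ} {f0 s : ℝ} (hf0 : 0 < f0) (hs : 0 < s)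
    (hl : Tendsto (fun δ => (H δ - f0) / δ) (𝓝[>] 0) (𝓝 (-s)))
    (hd : ∀ p q a b c : ℝ, 0 < q → q < p → p < 1 → 0 < a → a < b → b < c → c < 1 →
      0 ≤ dt3 (H a) (H b) (H c) (H (p * a)) (H (p * b)) (H (p * c))
        (H (q * a)) (H (q * b)) (H (q * c))) :
    ∀ w, 0 < w → w < 1 → f0 - s * w ≤ H w := by
  have hid : Tendsto (fun δ : ℝ => δ) (𝓝[>] 0) (𝓝 0) := nhdsWithin_le_nhds
  have hH : Tendsto H (𝓝[>] 0) (𝓝 f0) := by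
    have := (hl.mul hid).add_const f0
    simp only [mul_zero, zero_add] at this
    refine this.congr' ?_
    filter_upwards [self_mem_nhdsWithin] with δ hδ
    have : δ ≠ 0 := ne_of_gt hδ
    field_simp
    ring
  have h1 : ∀ p a b c : ℝ, 0 < p → p < 1 → 0 < a → a < b → b < c → c < 1 →
      0 ≤ dt3 (H a) (H b) (H c) (H (p * a)) (H (p * b)) (H (p * c)) f0 f0 f0 := by
    intro p a b c hp hp1 ha hab hbc hc
    have ta := scaled_lim hH ha
    have tb := scaled_lim hH (ha.trans hab)
    have tc := scaled_lim hH ((ha.trans hab).trans hbc)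
    have : Tendsto (fun q => dt3 (H a) (H b) (H c) (H (p * a)) (H (p * b)) (H (p * c))
        (H (q * a)) (H (q * b)) (H (q * c))) (𝓝[>] 0)
        (𝓝 (dt3 (H a) (H b) (H c) (H (p * a)) (H (p * b)) (H (p * c)) f0 f0 f0)) := by
      unfold dt3
      repeat' first | assumption | exact tendsto_const_nhds | apply Tendsto.sub | apply Tendsto.add | apply Tendsto.mul
    refine ge_of_tendsto this ?_
    filter_upwards [Ioo_mem_nhdsGT hp] with q hq
    exact hd p q a b c hq.1 hq.2 hp1 ha hab hbc hc
  have h2 : ∀ a b c : ℝ, 0 < a → a < b → b < c → c < 1 →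
      0 ≤ dt3 (H a) (H b) (H c) (-s * a) (-s * b) (-s * c) f0 f0 f0 := by
    intro a b c ha hab hbc hc
    have ta := (scaled_lim hl ha).mul_const a
    have tb := (scaled_lim hl (ha.trans hab)).mul_const b
    have tc := (scaled_lim hl ((ha.trans hab).trans hbc)).mul_const c
    have : Tendsto (fun p => dt3 (H a) (H b) (H c) ((H (p * a) - f0) / (p * a) * a)
        ((H (p * b) - f0) / (p * b) * b) ((H (p * c) - f0) / (p * c) * c) f0 f0 f0) (𝓝[>] 0)
        (𝓝 (dt3 (H a) (H b) (H c) (-s * a) (-s * b) (-s * c) f0 f0 f0)) := by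
      unfold dt3
      repeat' first | assumption | exact tendsto_const_nhds | apply Tendsto.sub | apply Tendsto.add | apply Tendsto.mul
    refine ge_of_tendsto this ?_
    filter_upwards [Ioo_mem_nhdsGT one_pos] with p hp
    have hp0 := hp.1
    have := div_nonneg (h1 p a b c hp.1 hp.2 ha hab hbc hc) hp0.le
    convert this using 1
    have ha0 : a ≠ 0 := by linarith
    have hb0 : b ≠ 0 := by linarith
    have hc0 : c ≠ 0 := by linarith
    unfold dt3
    field_simp
    ring
  have h3 : ∀ a b c : ℝ, 0 < a → a < b → b < c → c < 1 →
      H b * (c - a) ≤ H a * (c - b) + H c * (b - a) := by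
    intro a b c ha hab hbc hc
    have := h2 a b c ha hab hbc hc
    have e : dt3 (H a) (H b) (H c) (-s * a) (-s * b) (-s * c) f0 f0 f0
      = (s * f0) * (H a * (c - b) + H c * (b - a) - H b * (c - a)) := by unfold dt3; ring
    rw [e] at this
    have := nonneg_of_mul_nonneg_right this (by positivity)
    linarith
  have h4 : ∀ b c : ℝ, 0 < b → b < c → c < 1 → (H b - f0) / b * c ≤ H c - f0 := by
    intro b c hb hbc hc
    have t1 : Tendsto (fun a => H b * (c - a)) (𝓝[>] 0) (𝓝 (H b * (c - 0))) :=
      (tendsto_const_nhds.sub hid).const_mul _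
    have t2 : Tendsto (fun a => H a * (c - b) + H c * (b - a)) (𝓝[>] 0)
      (𝓝 (f0 * (c - b) + H c * (b - 0))) :=
      (hH.mul_const _).add ((tendsto_const_nhds.sub hid).const_mul _)
    have := le_of_tendsto_of_tendsto t1 t2 (by
      filter_upwards [Ioo_mem_nhdsGT hb] with a ha
      exact h3 a b c ha.1 ha.2 hbc hc)
    rw [div_mul_eq_mul_div, div_le_iff₀ hb]
    linarith
  intro w hw hw1
  have := le_of_tendsto (hl.mul_const w) (by
    filter_upwards [Ioo_mem_nhdsGT hw] with b hb
    exact h4 b w hb.1 hb.2 hw1)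
  linarith

theorem above_tangent {C : ℝ → ℝ} {f0 a b : ℝ} (hf0 : 0 < f0) (ha : 0 < a) (hb : 0 < b)
    (l3 : Tendsto (fun z => (C z - f0 + a * z ^ 2) / z ^ 3) (𝓝[>] 0) (𝓝 b))
    (hd : ∀ (p q r : ℝ) (z : Fin 4 → ℝ), 0 < r → r < q → q < p → p < 1 → StrictMono z →
      (∀ i, 0 < z i) → (∀ i, z i < 1) →
      0 ≤ dt4 (fun j => C (z j)) (fun j => C (p * z j)) (fun j => C (q * z j))
        (fun j => C (r * z j))) :
    ∀ w, 0 < w → w < 1 → C w ≤ f0 - a * w ^ 2 + b * w ^ 3 := by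
  have hid : Tendsto (fun δ : ℝ => δ) (𝓝[>] 0) (𝓝 0) := nhdsWithin_le_nhds
  have l2 : Tendsto (fun z => (C z - f0) / z ^ 2) (𝓝[>] 0) (𝓝 (-a)) := by
    have := (l3.mul hid).sub_const a
    simp only [mul_zero, zero_sub] at this
    refine this.congr' ?_
    filter_upwards [self_mem_nhdsWithin] with δ hδ
    have : δ ≠ 0 := ne_of_gt hδ
    field_simp
    ring
  have l0 : Tendsto C (𝓝[>] 0) (𝓝 f0) := by
    have := (l2.mul (hid.pow 2)).add_const f0
    norm_num at this
    refine this.congr' ?_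
    filter_upwards [self_mem_nhdsWithin] with δ hδ
    have : δ ≠ 0 := ne_of_gt hδ
    field_simp
    ring
  have h1 : ∀ (p q : ℝ) (z : Fin 4 → ℝ), 0 < q → q < p → p < 1 → StrictMono z →
      (∀ i, 0 < z i) → (∀ i, z i < 1) →
      0 ≤ dt4 (fun j => C (z j)) (fun j => C (p * z j)) (fun j => C (q * z j)) (fun _ => f0) := by
    intro p q z hq hqp hp hz hz0 hz1
    refine ge_of_tendsto (dt4_tendsto tendsto_const_nhds tendsto_const_nhds tendsto_const_nhds
      (tendsto_pi_nhds.2 fun j => scaled_lim l0 (hz0 j))) ?_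
    filter_upwards [Ioo_mem_nhdsGT hq] with r hr
    exact hd p q r z hr.1 hr.2 hqp hp hz hz0 hz1
  have h2 : ∀ (p : ℝ) (z : Fin 4 → ℝ), 0 < p → p < 1 → StrictMono z →
      (∀ i, 0 < z i) → (∀ i, z i < 1) →
      0 ≤ dt4 (fun j => C (z j)) (fun j => C (p * z j)) (fun j => -a * z j ^ 2) (fun _ => f0) := by
    intro p z hp0 hp hz hz0 hz1
    refine ge_of_tendsto (dt4_tendsto tendsto_const_nhds tendsto_const_nhds 
      (tendsto_pi_nhds.2 fun j => (scaled_lim l2 (hz0 j)).mul_const (z j ^ 2)) 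
      tendsto_const_nhds) ?_
    filter_upwards [Ioo_mem_nhdsGT hp0] with q hq
    have hq0 : q ≠ 0 := hq.1.ne'
    have := div_nonneg (h1 p q z hq.1 hq.2 hp hz hz0 hz1) (sq_nonneg q)
    convert this using 1
    have e : ∀ j, (C (q * z j) - f0) / (q * z j) ^ 2 * z j ^ 2 = (C (q * z j) - f0) / q ^ 2 := by
      intro j
      have := (hz0 j).ne'
      field_simp
    simp only [e]
    unfold dt4 dt3
    field_simp
    ring
  have h3 : ∀ (z : Fin 4 → ℝ), StrictMono z → (∀ i, 0 < z i) → (∀ i, z i < 1) →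
      0 ≤ dt4 (fun j => C (z j)) (fun j => b * z j ^ 3) (fun j => -a * z j ^ 2) (fun _ => f0) := by
    intro z hz hz0 hz1
    refine ge_of_tendsto (dt4_tendsto tendsto_const_nhds
      (tendsto_pi_nhds.2 fun j => (scaled_lim l3 (hz0 j)).mul_const (z j ^ 3))
      tendsto_const_nhds tendsto_const_nhds) ?_
    filter_upwards [Ioo_mem_nhdsGT one_pos] with p hp
    have hp0 : p ≠ 0 := hp.1.ne'
    have := div_nonneg (h2 p z hp.1 hp.2 hz hz0 hz1) (pow_pos hp.1 3).le
    convert this using 1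
    have e : ∀ j, (C (p * z j) - f0 + a * (p * z j) ^ 2) / (p * z j) ^ 3 * z j ^ 3
        = (C (p * z j) - f0 + a * (p * z j) ^ 2) / p ^ 3 := by
      intro j
      have := (hz0 j).ne'
      field_simp
    simp only [e]
    unfold dt4 dt3
    field_simp
    ring
  -- columns
  have h4 : ∀ x y z w : ℝ, 0 < x → x < y → y < z → z < w → w < 1 →
      dt4 ![C x, C y, C z, C w] ![x ^ 3, y ^ 3, z ^ 3, w ^ 3] ![x ^ 2, y ^ 2, z ^ 2, w ^ 2]
        ![1, 1, 1, 1] ≤ 0 := by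
    intro x y z w hx hxy hyz hzw hw
    have hmono : StrictMono ![x, y, z, w] := by
      refine Fin.strictMono_iff_lt_succ.2 ?_
      intro i
      fin_cases i <;> simpa
    have := h3 ![x, y, z, w] hmono
      (by intro i; fin_cases i <;> simp <;> linarith)
      (by intro i; fin_cases i <;> simp <;> linarith)
    have e : dt4 (fun j => C (![x, y, z, w] j)) (fun j => b * ![x, y, z, w] j ^ 3)
        (fun j => -a * ![x, y, z, w] j ^ 2) (fun _ => f0) = (a * b * f0) *
        (-dt4 ![C x, C y, C z, C w] ![x ^ 3, y ^ 3, z ^ 3, w ^ 3] ![x ^ 2, y ^ 2, z ^ 2, w ^ 2]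
        ![1, 1, 1, 1]) := by
      simp [dt4, dt3]
      ring
    rw [e] at this
    have := nonneg_of_mul_nonneg_right this (by positivity)
    linarith
  have h5 : ∀ y z w : ℝ, 0 < y → y < z → z < w → w < 1 →
      dt4 ![f0, C y, C z, C w] ![0, y ^ 3, z ^ 3, w ^ 3] ![0, y ^ 2, z ^ 2, w ^ 2]
        ![1, 1, 1, 1] ≤ 0 := by
    intro y z w hy hyz hzw hw
    have t3 : Tendsto (fun x : ℝ => x ^ 3) (𝓝[>] 0) (𝓝 0) := by simpa using hid.pow 3
    have t2 : Tendsto (fun x : ℝ => x ^ 2) (𝓝[>] 0) (𝓝 0) := by simpa using hid.pow 2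
    refine le_of_tendsto (f := fun x => dt4 ![C x, C y, C z, C w] ![x ^ 3, y ^ 3, z ^ 3, w ^ 3]
      ![x ^ 2, y ^ 2, z ^ 2, w ^ 2] ![1, 1, 1, 1]) (x := 𝓝[>] (0:ℝ))
      (dt4_tendsto (tendsto_pi_nhds.2 fun j => ?_) (tendsto_pi_nhds.2 fun j => ?_)
        (tendsto_pi_nhds.2 fun j => ?_) tendsto_const_nhds) ?_
    · fin_cases j
      · exact l0
      all_goals exact tendsto_const_nhds
    · fin_cases j
      · exact t3
      all_goals exact tendsto_const_nhds
    · fin_cases j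
      · exact t2
      all_goals exact tendsto_const_nhds
    · filter_upwards [Ioo_mem_nhdsGT hy] with x hx
      exact h4 x y z w hx.1 hx.2 hyz hzw hw
  have h6 : ∀ z w : ℝ, 0 < z → z < w → w < 1 →
      dt4 ![f0, -a, C z, C w] ![0, 0, z ^ 3, w ^ 3] ![0, 1, z ^ 2, w ^ 2]
        ![1, 0, 1, 1] ≤ 0 := by
    intro z w hz hzw hw
    refine le_of_tendsto (f := fun y => dt4 ![f0, (C y - f0) / y ^ 2, C z, C w] ![0, y, z ^ 3, w ^ 3]
      ![0, 1, z ^ 2, w ^ 2] ![1, 0, 1, 1]) (x := 𝓝[>] (0:ℝ))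
      (dt4_tendsto (tendsto_pi_nhds.2 fun j => ?_) (tendsto_pi_nhds.2 fun j => ?_)
        tendsto_const_nhds tendsto_const_nhds) ?_
    · fin_cases j
      · exact tendsto_const_nhds
      · exact l2
      all_goals exact tendsto_const_nhds
    · fin_cases j
      · exact tendsto_const_nhds
      · exact hid
      all_goals exact tendsto_const_nhds
    · filter_upwards [Ioo_mem_nhdsGT hz] with y hy
      have := div_nonpos_of_nonpos_of_nonneg (h5 y z w hy.1 hy.2 hzw hw) (sq_nonneg y)
      have hy0 : y ≠ 0 := hy.1.ne'
      convert this using 1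
      simp [dt4, dt3]
      field_simp
      ring
  intro w hw hw1
  have h7 : dt4 ![f0, -a, b, C w] ![0, 0, 1, w ^ 3] ![0, 1, 0, w ^ 2] ![1, 0, 0, 1] ≤ 0 := by
    refine le_of_tendsto (f := fun z => dt4 ![f0, -a, (C z - f0 + a * z ^ 2) / z ^ 3, C w]
      ![0, 0, 1, w ^ 3] ![0, 1, 0, w ^ 2] ![1, 0, 0, 1]) (x := 𝓝[>] (0:ℝ))
      (dt4_tendsto (tendsto_pi_nhds.2 fun j => ?_) tendsto_const_nhds
        tendsto_const_nhds tendsto_const_nhds) ?_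
    · fin_cases j
      · exact tendsto_const_nhds
      · exact tendsto_const_nhds
      · exact l3
      · exact tendsto_const_nhds
    · filter_upwards [Ioo_mem_nhdsGT hw] with z hz
      have hz0 : z ≠ 0 := hz.1.ne'
      have := div_nonpos_of_nonpos_of_nonneg (h6 z w hz.1 hz.2 hw1) (pow_pos hz.1 3).le
      convert this using 1
      simp [dt4, dt3]
      field_simp
      ring
  simp [dt4, dt3] at h7
  linarith

end dets

section final
open Filter Topology

theorem Pres.linear_at {X Y : Set ℝ} (hXY : AdmissiblePair X Y) {F : ℝ → ℝ}
    (hF : ∀ x : ℝ, 0 < x → 0 < F x) (h : Pres X Y F) {A : ℝ} (hA : 0 < A) :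
    ∀ δ, 0 < δ → δ < 1 → F (A * (1 - δ)) = F A * (1 - δ) := by
  obtain ⟨hcont, hdata⟩ := local_data hF (fun a b c ha hb hc habc => h.two hXY ha hb hc habc)
  obtain ⟨α, hα, hexp, hpow, hlim⟩ := hdata A hA
  have hFA := hF A hA
  set s := F A * α with hs
  have hs0 : 0 < s := by positivity
  set H : ℝ → ℝ := fun δ => F (A * (1 - δ)) with hH
  have hlow : ∀ w, 0 < w → w < 1 → F A - s * w ≤ H w := by
    refine below_tangent hFA hs0 hlim ?_
    intro p q a b c hq hqp hp ha hab hbc hc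
    have hp0 : 0 < p := hq.trans hqp
    have hb : 0 < b := ha.trans hab
    have hc0 : 0 < c := hb.trans hbc
    have hsp : √p < 1 := by rw [Real.sqrt_lt' one_pos]; simpa
    have hsq : √q < √p := Real.sqrt_lt_sqrt hq.le hqp
    have hsq0 : 0 < √q := Real.sqrt_pos.2 hq
    have hsp0 : 0 < √p := Real.sqrt_pos.2 hp0
    have hsa0 : 0 < √a := Real.sqrt_pos.2 ha
    have hsb0 : 0 < √b := Real.sqrt_pos.2 hb
    have hsc0 : 0 < √c := Real.sqrt_pos.2 hc0
    have hsab : √a < √b := Real.sqrt_lt_sqrt ha.le hab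
    have hsbc : √b < √c := Real.sqrt_lt_sqrt hb.le hbc
    have hsc : √c < 1 := by rw [Real.sqrt_lt' one_pos]; simpa
    have hu1 : 1 < (√p)⁻¹ := (one_lt_inv₀ hsp0).2 hsp
    have hu2 : (√p)⁻¹ < (√q)⁻¹ := (inv_lt_inv₀ hsp0 hsq0).2 hsq
    have := h.testB hXY hcont hA 3 ![1, (√p)⁻¹, (√q)⁻¹] ![√a, √b, √c]
      (by intro i; fin_cases i <;> simp <;> assumption)
      (by intro i; fin_cases i <;> simp <;> assumption)
      (by
        refine Fin.strictMono_iff_lt_succ.2 ?_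
        intro i; fin_cases i
        · exact hu1
        · exact hu2)
      (by
        refine Fin.strictMono_iff_lt_succ.2 ?_
        intro i; fin_cases i
        · exact hsab
        · exact hsbc)
      (by
        intro i j
        have h1 : 1 ≤ ![1, (√p)⁻¹, (√q)⁻¹] i := by
          fin_cases i
          · exact le_refl (1:ℝ)
          · exact hu1.le
          · exact (hu1.trans hu2).le
        refine lt_of_lt_of_le ?_ h1
        fin_cases j
        · exact (hsab.trans hsbc).trans hsc
        · exact hsbc.trans hsc
        · exact hsc)
    rw [Matrix.det_fin_three] at this
    simp [mul_pow, Real.sq_sqrt, ha.le, hb.le, hc0.le, hp0.le, hq.le] at this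
    simp only [dt3, hH]
    rw [mul_comm p a, mul_comm p b, mul_comm p c, mul_comm q a, mul_comm q b, mul_comm q c]
    linarith
  have hup : ∀ w, 0 < w → w < 1 →
      H (3 * w ^ 2 - 2 * w ^ 3) ≤ F A - (3 * s) * w ^ 2 + (2 * s) * w ^ 3 := by
    refine above_tangent (C := fun z => H (3 * z ^ 2 - 2 * z ^ 3)) hFA (by positivity) (by positivity) ?_ ?_
    · have hid : Tendsto (fun δ : ℝ => δ) (𝓝[>] 0) (𝓝 0) := nhdsWithin_le_nhds
      have tl : Tendsto (fun _ : ℝ => 2 * s) (𝓝[>] 0) (𝓝 (2 * s)) := tendsto_const_nhds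
      have tu : Tendsto (fun z : ℝ => 2 * s + (9 * F A * α ^ 2) * z) (𝓝[>] 0) (𝓝 (2 * s)) := by
        simpa using (hid.const_mul (9 * F A * α ^ 2)).const_add (2 * s)
      have hsmall : 0 < min (1/2) (1 / (3 * α)) := by positivity
      refine tendsto_of_tendsto_of_tendsto_of_le_of_le' tl tu ?_ ?_
      · filter_upwards [Ioo_mem_nhdsGT hsmall] with z hz
        have hz0 := hz.1
        have hz1 : z < 1/2 := hz.2.trans_le (min_le_left _ _)
        have hw0 : 0 < 3 * z ^ 2 - 2 * z ^ 3 := by nlinarith [pow_pos hz0 2]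
        have hw1 : 3 * z ^ 2 - 2 * z ^ 3 < 1 := by nlinarith [pow_pos hz0 2]
        have := hlow _ hw0 hw1
        rw [le_div_iff₀ (by positivity)]
        linarith
      · filter_upwards [Ioo_mem_nhdsGT hsmall] with z hz
        have hz0 := hz.1
        have hz1 : z < 1/2 := hz.2.trans_le (min_le_left _ _)
        have hz2 : z < 1 / (3 * α) := hz.2.trans_le (min_le_right _ _)
        rw [lt_div_iff₀ (by positivity)] at hz2
        have hw0 : 0 < 3 * z ^ 2 - 2 * z ^ 3 := by nlinarith [pow_pos hz0 2]
        have hw1 : 3 * z ^ 2 - 2 * z ^ 3 < 1 := by nlinarith [pow_pos hz0 2]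
        have hw3 : 3 * z ^ 2 - 2 * z ^ 3 ≤ 3 * z ^ 2 := by nlinarith [pow_pos hz0 3]
        have h1 := hexp _ hw0 hw1
        set w := 3 * z ^ 2 - 2 * z ^ 3 with hw
        have hαw : α * w ≤ 1 := by
          have : α * w ≤ α * (3 * z ^ 2) := by gcongr
          nlinarith
        have h2 := Real.abs_exp_sub_one_sub_id_le (x := -(α * w)) (by
          rw [abs_neg, abs_of_pos (by positivity)]; exact hαw)
        have h3 := (abs_le.1 h2).2
        have h4 : F A * Real.exp (-(α * w)) ≤ F A * (1 - α * w + (α * w) ^ 2) := by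
          gcongr; linarith
        have h5 : w ^ 2 ≤ (3 * z ^ 2) ^ 2 := by gcongr
        have h6 : F A * α ^ 2 * w ^ 2 ≤ F A * α ^ 2 * (3 * z ^ 2) ^ 2 := by gcongr
        rw [div_le_iff₀ (by positivity)]
        have h7 : H w ≤ F A - s * w + F A * α ^ 2 * w ^ 2 := by
          rw [hs]; simp only [hH]; linarith
        have h8 : s * w = 3 * s * z ^ 2 - 2 * s * z ^ 3 := by rw [hw]; ring
        linarith
    · intro p q r z hr hrq hqp hp hz hz0 hz1
      have hq : 0 < q := hr.trans hrq
      have hp0 : 0 < p := hq.trans hqp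
      have hu1 : 1 < p⁻¹ := (one_lt_inv₀ hp0).2 hp
      have hu2 : p⁻¹ < q⁻¹ := (inv_lt_inv₀ hp0 hq).2 hqp
      have hu3 : q⁻¹ < r⁻¹ := (inv_lt_inv₀ hq hr).2 hrq
      have := h.testC hXY hcont hA 4 ![1, p⁻¹, q⁻¹, r⁻¹] z
        (by intro i; fin_cases i <;> simp <;> assumption) hz0
        (by
          refine Fin.strictMono_iff_lt_succ.2 ?_
          intro i; fin_cases i
          · exact hu1
          · exact hu2
          · exact hu3) hz
        (by
          intro i j
          have h1 : 1 ≤ ![1, p⁻¹, q⁻¹, r⁻¹] i := by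
            fin_cases i
            · exact le_refl (1:ℝ)
            · exact hu1.le
            · exact (hu1.trans hu2).le
            · exact ((hu1.trans hu2).trans hu3).le
          exact lt_of_lt_of_le (hz1 j) h1)
      rw [dt4_eq] at this
      convert this using 2 with j
      · ext j; simp [hH]
      · ext j; simp [hH, mul_comm]
      · ext j; simp [hH, mul_comm]
      · ext j; simp [hH, mul_comm]
  have heq : ∀ δ, 0 < δ → δ < 1 → H δ = F A * (1 - α * δ) := by
    intro δ h0 h1
    refine le_antisymm ?_ (by have := hlow δ h0 h1; rw [hs] at this; linarith)
    obtain ⟨w, hw, hwδ⟩ : δ ∈ (fun w : ℝ => 3 * w ^ 2 - 2 * w ^ 3) '' Set.Ioo 0 1 := by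
      refine intermediate_value_Ioo zero_le_one (by fun_prop) ?_
      constructor <;> norm_num <;> assumption
    have := hup w hw.1 hw.2
    simp only at hwδ
    rw [hwδ] at this
    have e : s * δ = 3 * s * w ^ 2 - 2 * s * w ^ 3 := by rw [← hwδ]; ring
    rw [hs] at this e
    linarith
  have hid : Tendsto (fun t : ℝ => t) (𝓝[>] 0) (𝓝 0) := nhdsWithin_le_nhds
  have tm : Tendsto (fun t : ℝ => 1 - α * (1 - t)) (𝓝[>] 0) (𝓝 (1 - α)) := by
    simpa using ((hid.const_sub 1).const_mul α).const_sub 1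
  have tr : Tendsto (fun t : ℝ => Real.exp (α * Real.log t)) (𝓝[>] 0) (𝓝 0) :=
    Real.tendsto_exp_atBot.comp (Real.tendsto_log_nhdsGT_zero.const_mul_atBot hα)
  have hα1 : 1 - α = 0 := by
    refine le_antisymm (le_of_tendsto_of_tendsto tm tr ?_) (ge_of_tendsto tm ?_)
    · filter_upwards [Ioo_mem_nhdsGT one_pos] with t ht
      have h1 := hpow (1 - t) (by linarith [ht.2]) (by linarith [ht.1])
      have h2 := heq (1 - t) (by linarith [ht.2]) (by linarith [ht.1])
      simp only [hH] at h2
      rw [h2, sub_sub_cancel] at h1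
      exact le_of_mul_le_mul_left h1 hFA
    · filter_upwards [Ioo_mem_nhdsGT one_pos] with t ht
      have h2 := heq (1 - t) (by linarith [ht.2]) (by linarith [ht.1])
      have h3 : 0 < H (1 - t) := hF _ (by rw [sub_sub_cancel]; exact mul_pos hA ht.1)
      rw [h2] at h3
      exact (pos_of_mul_pos_right h3 hFA.le).le
  intro δ h0 h1
  have := heq δ h0 h1
  rw [show α = 1 by linarith, one_mul] at this
  exact this

end final

theorem stmt_17 (X Y : Set ℝ) (hXY : AdmissiblePair X Y) (F : ℝ → ℝ)
    (hF : ∀ x : ℝ, 0 < x → 0 < F x) :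
    (∀ K : X → Y → ℝ, (∃ f : ℝ → ℝ, ∀ (a : X) (b : Y), K a b = f ((a : ℝ) - (b : ℝ))) →
        IsTPKernel K →
        ((∃ g : ℝ → ℝ, ∀ (a : X) (b : Y), F (K a b) = g ((a : ℝ) - (b : ℝ))) ∧
          IsTPKernel fun a b => F (K a b))) ↔
      ∃ c : ℝ, 0 < c ∧ ∀ x : ℝ, 0 < x → F x = c * x := by
  constructor
  · intro h
    have h : Pres X Y F := h
    refine ⟨F 1, hF 1 one_pos, ?_⟩
    intro x hx
    rcases lt_trichotomy x 1 with hlt | rfl | hgt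
    · have := h.linear_at hXY hF one_pos (1 - x) (by linarith) (by linarith)
      simpa using this
    · simp
    · have hi : x⁻¹ < 1 := inv_lt_one_of_one_lt₀ hgt
      have hi0 : 0 < x⁻¹ := by positivity
      have := h.linear_at hXY hF hx (1 - x⁻¹) (by linarith) (by linarith)
      rw [sub_sub_cancel, mul_inv_cancel₀ hx.ne'] at this
      rw [this]
      field_simp
  · rintro ⟨c, hc, hlin⟩ K ⟨f, hf⟩ hK
    refine ⟨⟨fun t => F (f t), fun a b => by rw [hf]⟩, ?_⟩
    have hpos : ∀ a b, 0 < K a b := by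
      intro a b
      have := hK 1 (fun _ => a) (fun _ => b) (Subsingleton.strictMono _) (Subsingleton.strictMono _)
      simpa using this
    intro n x y hx hy
    have := hK n x y hx hy
    have e : (Matrix.of fun i j : Fin n => F (K (x i) (y j)))
        = c • (Matrix.of fun i j : Fin n => K (x i) (y j)) := by
      ext i j
      simp [hlin _ (hpos (x i) (y j))]
    rw [e, Matrix.det_smul]
    positivity
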